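/- Let a, b be smooth compactly supported functions on ℝ³ = ℝ²_h × ℝ_v. Then ( ∫_ℝ ‖(ab)(·,x₃)‖²_{Ḣ^{1/2}(ℝ²)} dx₃ )^{1/2} ≤ C ‖a‖_{Ḣ^{1/2}(ℝ³)} ( ‖∇_h b‖_{L^∞_v L²_h} + ‖b‖_{L^∞(ℝ³)} ) for a universal constant C. -/

import Mathlib

open MeasureTheory Real
open scoped FourierTransform ENNReal

noncomputable section

/-- `ℝ^d` as a Euclidean space. -/
abbrev E (d : ℕ) := EuclideanSpace ℝ (Fin d)

/-- Homogeneous Sobolev norm `‖f‖_{Ḣ^s(ℝ^d)} = (∫ |ξ|^{2s} |𝓕f(ξ)|² dξ)^{1/2}`. -/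
noncomputable def hNorm (d : ℕ) (s : ℝ) (f : E d → ℂ) : ℝ :=
  (∫ ξ : E d, ‖ξ‖ ^ (2 * s) * ‖𝓕 f ξ‖ ^ 2) ^ (1/2 : ℝ)

/-- Embedding `ℝ² × ℝ → ℝ³`, `(x_h, x₃) ↦ (x₁,x₂,x₃)`. -/
noncomputable def emb (xh : E 2) (t : ℝ) : E 3 :=
  (EuclideanSpace.equiv (Fin 3) ℝ).symm ![xh 0, xh 1, t]

/-!
By subadditivity of `r ↦ r ^ s` for `s ≤ 1`, `||ξ|^s - |ξ - η|^s| ≤ |η|^s`. Hence, up to an error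
bounded by the convolution of `|·|^s |𝓕v|` with `|𝓕u|`, applying `|ξ|^s` to `𝓕(uv) = 𝓕v ⋆ 𝓕u`
gives `𝓕v ⋆ |·|^s 𝓕u`, whose `L²` norm is at most `‖v‖_∞ ‖u‖_{Ḣ^s}` by Plancherel. The error is
bounded by duality and Cauchy–Schwarz, separately on `|ξ| ≤ |η|` and on `|η| ≤ |ξ|`, because
`∫_{|x| ≤ r} |x|^{-α} dx` is a multiple of `r^{n-α}` for `α < n`; in the plane this leaves a factor
`‖v‖_{Ḣ¹} ≤ ‖∇v‖_{L²}`. Finally, Plancherel in the vertical variable and `|ξ_h| ≤ |ξ|` show that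
`‖a‖_{L²_v Ḣ^s_h} ≤ ‖a‖_{Ḣ^s}`.
-/

section Lebesgue

variable {α : Type*} [MeasurableSpace α] {μ : Measure α}

lemma rpow_div_two_sq (x : ℝ≥0∞) (r : ℝ) : (x ^ (r / 2)) ^ 2 = x ^ r := by
  rw [← ENNReal.rpow_mul_natCast]
  simp

lemma add_sq_le_two_mul (x y : ℝ≥0∞) : (x + y) ^ 2 ≤ 2 * (x ^ 2 + y ^ 2) := by
  have h := ENNReal.rpow_add_le_mul_rpow_add_rpow x y one_le_two
  simp only [ENNReal.rpow_two] at h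
  norm_num at h
  exact h

lemma ofReal_integral_le_lintegral_ofReal {f : α → ℝ} (hf : ∀ x, 0 ≤ f x) :
    ENNReal.ofReal (∫ x, f x ∂μ) ≤ ∫⁻ x, ENNReal.ofReal (f x) ∂μ := by
  by_cases h : Integrable f μ
  · exact (ofReal_integral_eq_lintegral_ofReal h (ae_of_all μ hf)).le
  · simp [integral_undef h]

lemma sq_lintegral_mul_le {f g : α → ℝ≥0∞} (hf : AEMeasurable f μ) (hg : AEMeasurable g μ) :
    (∫⁻ x, f x * g x ∂μ) ^ 2 ≤ (∫⁻ x, f x ^ 2 ∂μ) * ∫⁻ x, g x ^ 2 ∂μ := by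
  have h := ENNReal.lintegral_mul_le_Lp_mul_Lq μ Real.HolderConjugate.two_two hf hg
  simp only [ENNReal.rpow_two] at h
  calc (∫⁻ x, f x * g x ∂μ) ^ 2
    _ ≤ ((∫⁻ x, f x ^ 2 ∂μ) ^ (1 / 2 : ℝ) * (∫⁻ x, g x ^ 2 ∂μ) ^ (1 / 2 : ℝ)) ^ 2 :=
        pow_le_pow_left' h 2
    _ = _ := by simp only [mul_pow, rpow_div_two_sq, ENNReal.rpow_one]

lemma lintegral_sq_le_of_forall_sq_lintegral_mul_le [SigmaFinite μ] {F : α → ℝ≥0∞} {C : ℝ≥0∞}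
    (h : ∀ T : α → ℝ≥0∞, Measurable T → (∫⁻ x, T x * F x ∂μ) ^ 2 ≤ C * ∫⁻ x, T x ^ 2 ∂μ) :
    ∫⁻ x, F x ^ 2 ∂μ ≤ C := by
  refine le_of_forall_lt fun c hc => ?_
  rw [lintegral_eq_nnreal] at hc
  simp_rw [lt_iSup_iff, ← SimpleFunc.lintegral_eq_lintegral, SimpleFunc.coe_map] at hc
  obtain ⟨φ, hφF, hcφ⟩ := hc
  obtain ⟨ψ, hψφ, hψ_fin, hcψ⟩ := exists_lt_lintegral_simpleFunc_of_lt_lintegral hcφ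
  let T : α → ℝ≥0∞ := fun x => (ψ x : ℝ≥0∞) ^ (1 / 2 : ℝ)
  have hTF (x : α) : T x ≤ F x := (ENNReal.pow_le_pow_left_iff two_ne_zero).1 <| by
    rw [rpow_div_two_sq, ENNReal.rpow_one]
    exact (ENNReal.coe_le_coe.2 (hψφ x)).trans (hφF x)
  have hT_sq : ∫⁻ x, T x ^ 2 ∂μ = ∫⁻ x, ψ x ∂μ := by
    simp only [T, rpow_div_two_sq, ENNReal.rpow_one]
  have hψC : (∫⁻ x, ψ x ∂μ) * ∫⁻ x, ψ x ∂μ ≤ C * ∫⁻ x, ψ x ∂μ := by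
    calc (∫⁻ x, ψ x ∂μ) * ∫⁻ x, ψ x ∂μ
      _ = (∫⁻ x, T x ^ 2 ∂μ) ^ 2 := by rw [hT_sq, sq]
      _ ≤ (∫⁻ x, T x * F x ∂μ) ^ 2 := by
          gcongr with x
          rw [sq]
          gcongr
          exact hTF x
      _ ≤ C * ∫⁻ x, ψ x ∂μ := hT_sq ▸ h T (by fun_prop)
  exact hcψ.trans_le ((ENNReal.mul_le_mul_iff_left (pos_of_gt hcψ).ne' hψ_fin.ne).1 hψC)

variable {F : Type*} [NormedAddCommGroup F]

lemma lintegral_enorm_sq_eq_eLpNorm_sq {f : α → F} :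
    ∫⁻ x, ‖f x‖ₑ ^ 2 ∂μ = eLpNorm f 2 μ ^ 2 := by
  simpa using (eLpNorm_nnreal_pow_eq_lintegral (f := f) (p := 2) (μ := μ) two_ne_zero).symm

lemma memLp_two_of_integrable_of_bounded {f : α → F} {C : ℝ} (hf : Integrable f μ)
    (hC : ∀ x, ‖f x‖ ≤ C) : MemLp f 2 μ := by
  rw [memLp_two_iff_integrable_sq_norm hf.1]
  simpa only [sq] using
    hf.norm.bdd_mul (c := C) hf.1.norm (ae_of_all μ fun x => by simpa using hC x)

lemma ofReal_integral_norm_sq {f : α → F} (hf : MemLp f 2 μ) :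
    ENNReal.ofReal (∫ x, ‖f x‖ ^ 2 ∂μ) = ∫⁻ x, ‖f x‖ₑ ^ 2 ∂μ := by
  rw [ofReal_integral_eq_lintegral_ofReal (hf.integrable_norm_pow two_ne_zero)
    (ae_of_all _ fun x => by positivity)]
  simp only [ENNReal.ofReal_pow (norm_nonneg _), ofReal_norm]

end Lebesgue

section WeightedConvolution

variable {V : Type*} [NormedAddCommGroup V] [MeasureSpace V]

/-- The square of the `L²` norm of `f` with weight `|x|^α`. -/
def weightedL2Sq (α : ℝ) (f : V → ℝ≥0∞) : ℝ≥0∞ :=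
  ∫⁻ x, ‖x‖ₑ ^ α * f x ^ 2

variable (V) in
/-- The integral of the Riesz kernel `|x|^(-α)` over the unit ball. -/
def rieszConst (α : ℝ) : ℝ≥0∞ :=
  ∫⁻ x in Metric.closedBall (0 : V) 1, ‖x‖ₑ ^ (-α)

/-- The part `|x| ≤ |y|` of the trilinear form `∬ T(x + y) f(x) g(y) dx dy`. -/
def lowHighForm (T f g : V → ℝ≥0∞) : ℝ≥0∞ :=
  ∫⁻ p in {p : V × V | ‖p.1‖ ≤ ‖p.2‖}, T (p.1 + p.2) * (f p.1 * g p.2)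

variable [NormedSpace ℝ V] [FiniteDimensional ℝ V] [BorelSpace V]
  [(volume : Measure V).IsAddHaarMeasure] {α : ℝ}

lemma setLIntegral_closedBall_enorm_rpow_neg {y : V} (hy : y ≠ 0) :
    ∫⁻ x in Metric.closedBall (0 : V) ‖y‖, ‖x‖ₑ ^ (-α) =
      ‖y‖ₑ ^ (Module.finrank ℝ V - α) * rieszConst V α := by
  have hr : ‖y‖ ≠ 0 := norm_ne_zero_iff.2 hy
  have hy₀ : ‖y‖ₑ ≠ 0 := enorm_ne_zero.2 hy
  set d := Module.finrank ℝ V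
  have h_ball : (fun x : V => ‖y‖ • x) ⁻¹' Metric.closedBall 0 ‖y‖ = Metric.closedBall 0 1 := by
    ext x
    simp [norm_smul, norm_pos_iff.2 hy]
  have h_scale : ENNReal.ofReal |(‖y‖ ^ d)⁻¹| *
      (∫⁻ x in Metric.closedBall (0 : V) ‖y‖, ‖x‖ₑ ^ (-α)) =
        ∫⁻ x in Metric.closedBall (0 : V) 1, ‖‖y‖ • x‖ₑ ^ (-α) := by
    rw [← smul_eq_mul, ← setLIntegral_smul_measure, ← Measure.map_addHaar_smul volume hr,
      setLIntegral_map measurableSet_closedBall (by fun_prop) (by fun_prop), h_ball]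
  have h_hom : ∫⁻ x in Metric.closedBall (0 : V) 1, ‖‖y‖ • x‖ₑ ^ (-α) =
      ‖y‖ₑ ^ (-α) * rieszConst V α := by
    rw [rieszConst, ← lintegral_const_mul _ (by fun_prop)]
    refine lintegral_congr fun x => ?_
    rw [enorm_smul, enorm_norm, ENNReal.mul_rpow_of_ne_top enorm_ne_top enorm_ne_top]
  have h_vol : ‖y‖ₑ ^ d * ENNReal.ofReal |(‖y‖ ^ d)⁻¹| = 1 := by
    rw [abs_of_nonneg (by positivity), ENNReal.ofReal_inv_of_pos (by positivity),
      ENNReal.ofReal_pow (norm_nonneg y), ofReal_norm,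
      ENNReal.mul_inv_cancel (pow_ne_zero d hy₀) (by finiteness)]
  calc ∫⁻ x in Metric.closedBall (0 : V) ‖y‖, ‖x‖ₑ ^ (-α)
    _ = ‖y‖ₑ ^ d * (‖y‖ₑ ^ (-α) * rieszConst V α) := by
        rw [← h_hom, ← h_scale, ← mul_assoc, h_vol, one_mul]
    _ = ‖y‖ₑ ^ (d - α) * rieszConst V α := by
        rw [← mul_assoc, sub_eq_add_neg, ENNReal.rpow_add _ _ hy₀ enorm_ne_top,
          ENNReal.rpow_natCast]

lemma lintegral_add_mul_weight_sq {T f : V → ℝ≥0∞} (hT : Measurable T) (hf : Measurable f) :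
    ∫⁻ p : V × V, T (p.1 + p.2) ^ 2 * (‖p.1‖ₑ ^ α * f p.1 ^ 2) =
      (∫⁻ x, T x ^ 2) * weightedL2Sq α f := by
  rw [Measure.volume_eq_prod, lintegral_prod _ (by fun_prop), weightedL2Sq,
    ← lintegral_const_mul _ (by fun_prop)]
  refine lintegral_congr fun x => ?_
  dsimp only
  rw [lintegral_mul_const _ (by fun_prop), lintegral_add_left_eq_self (fun y => T y ^ 2) x]

lemma lintegral_mul_lconvolution_le {T f g : V → ℝ≥0∞} (hT : Measurable T) (hf : Measurable f)
    (hg : Measurable g) :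
    ∫⁻ x, T x * (f ⋆ₗ g) x ≤ lowHighForm T f g + lowHighForm T g f := by
  let B : V × V → ℝ≥0∞ := fun p => T (p.1 + p.2) * (f p.1 * g p.2)
  have h_form : ∫⁻ x, T x * (f ⋆ₗ g) x = ∫⁻ p, B p := by
    calc ∫⁻ x, T x * (f ⋆ₗ g) x
      _ = ∫⁻ x, ∫⁻ y, T x * (f y * g (-y + x)) := by
          refine lintegral_congr fun x => ?_
          rw [lconvolution_def, lintegral_const_mul _ (by fun_prop)]
      _ = ∫⁻ y, ∫⁻ x, T x * (f y * g (-y + x)) := lintegral_lintegral_swap (by fun_prop)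
      _ = ∫⁻ y, ∫⁻ x, B (y, x) := by
          refine lintegral_congr fun y => ?_
          rw [← lintegral_add_left_eq_self _ y]
          simp only [B, neg_add_cancel_left]
      _ = ∫⁻ p, B p := (lintegral_prod B (by fun_prop)).symm
  have h_high : ∫⁻ p in {p : V × V | ‖p.2‖ ≤ ‖p.1‖}, B p = lowHighForm T g f := by
    rw [lowHighForm, Measure.volume_eq_prod,
      ← Measure.measurePreserving_swap.setLIntegral_comp_preimage_emb
        MeasurableEquiv.prodComm.measurableEmbedding]
    simp [B, add_comm, mul_comm]
  have h_cover : {p : V × V | ‖p.1‖ ≤ ‖p.2‖} ∪ {p | ‖p.2‖ ≤ ‖p.1‖} = Set.univ :=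
    Set.eq_univ_of_forall fun p => le_total ‖p.1‖ ‖p.2‖
  calc ∫⁻ x, T x * (f ⋆ₗ g) x
    _ = ∫⁻ p in {p : V × V | ‖p.1‖ ≤ ‖p.2‖} ∪ {p | ‖p.2‖ ≤ ‖p.1‖}, B p := by
        rw [h_cover, setLIntegral_univ, h_form]
    _ ≤ lowHighForm T f g + lowHighForm T g f := by
        rw [← h_high]
        exact lintegral_union_le _ _ _

variable [Nontrivial V]

lemma rieszConst_ne_top (hα : α < Module.finrank ℝ V) : rieszConst V α ≠ ∞ := by
  have h_int : IntegrableOn (fun x : V => ‖x‖ ^ (-α)) (Metric.ball 0 2) :=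
    integrableOn_ball_of_norm_le_rpow Module.finrank_pos (C := 1) hα
      (ae_of_all _ fun x => by simp [abs_of_nonneg (Real.rpow_nonneg (norm_nonneg x) _)])
      (by measurability : Measurable _).aestronglyMeasurable
  have h_sub : Metric.closedBall (0 : V) 1 ⊆ Metric.ball 0 2 :=
    Metric.closedBall_subset_ball one_lt_two
  have h_ae : ∀ᵐ x : V, x ≠ 0 := by simp [ae_iff]
  have h_eq : rieszConst V α = ∫⁻ x in Metric.closedBall (0 : V) 1, ‖‖x‖ ^ (-α)‖ₑ := by
    refine setLIntegral_congr_fun_ae measurableSet_closedBall (h_ae.mono fun x hx _ => ?_)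
    rw [Real.enorm_of_nonneg (by positivity), ← ENNReal.ofReal_rpow_of_pos (norm_pos_iff.2 hx),
      ofReal_norm]
  rw [h_eq]
  exact (h_int.mono_set h_sub).2.ne

lemma setLIntegral_lowHigh_enorm_rpow_neg {g : V → ℝ≥0∞} (hg : Measurable g) :
    ∫⁻ p in {p : V × V | ‖p.1‖ ≤ ‖p.2‖}, ‖p.1‖ₑ ^ (-α) * g p.2 ^ 2 =
      rieszConst V α * weightedL2Sq (Module.finrank ℝ V - α) g := by
  have h_meas : MeasurableSet {p : V × V | ‖p.1‖ ≤ ‖p.2‖} :=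
    measurableSet_le (by fun_prop) (by fun_prop)
  have h_ae : ∀ᵐ y : V, y ≠ 0 := by simp [ae_iff]
  rw [← lintegral_indicator h_meas, Measure.volume_eq_prod,
    lintegral_prod_symm _ ((Measurable.indicator (by fun_prop) h_meas).aemeasurable),
    weightedL2Sq, ← lintegral_const_mul _ (by fun_prop)]
  refine lintegral_congr_ae (h_ae.mono fun y hy => ?_)
  calc ∫⁻ x, {p : V × V | ‖p.1‖ ≤ ‖p.2‖}.indicator (fun p => ‖p.1‖ₑ ^ (-α) * g p.2 ^ 2) (x, y)
    _ = ∫⁻ x in Metric.closedBall (0 : V) ‖y‖, ‖x‖ₑ ^ (-α) * g y ^ 2 := by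
        rw [← lintegral_indicator measurableSet_closedBall]
        refine lintegral_congr fun x => ?_
        simp only [Set.indicator, Set.mem_ofPred_eq, mem_closedBall_zero_iff]
    _ = rieszConst V α * (‖y‖ₑ ^ (Module.finrank ℝ V - α) * g y ^ 2) := by
        rw [lintegral_mul_const _ (by fun_prop), setLIntegral_closedBall_enorm_rpow_neg hy]
        ring

lemma sq_lowHighForm_le {T f g : V → ℝ≥0∞} (hT : Measurable T) (hf : Measurable f)
    (hg : Measurable g) :
    lowHighForm T f g ^ 2 ≤ rieszConst V α * (∫⁻ x, T x ^ 2) *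
      (weightedL2Sq α f * weightedL2Sq (Module.finrank ℝ V - α) g) := by
  let F : V × V → ℝ≥0∞ := fun p => T (p.1 + p.2) * (‖p.1‖ₑ ^ (α / 2) * f p.1)
  let G : V × V → ℝ≥0∞ := fun p => ‖p.1‖ₑ ^ (-α / 2) * g p.2
  have h_ae : ∀ᵐ p : V × V, p.1 ≠ 0 :=
    Measure.quasiMeasurePreserving_fst.ae (p := fun x : V => x ≠ 0) (by simp [ae_iff])
  have h_factor : lowHighForm T f g = ∫⁻ p in {p : V × V | ‖p.1‖ ≤ ‖p.2‖}, F p * G p := by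
    refine lintegral_congr_ae (ae_restrict_of_ae (h_ae.mono fun p hp => ?_))
    have h_cancel : ‖p.1‖ₑ ^ (α / 2) * ‖p.1‖ₑ ^ (-α / 2) = 1 := by
      rw [← ENNReal.rpow_add _ _ (enorm_ne_zero.2 hp) enorm_ne_top, neg_div, add_neg_cancel,
        ENNReal.rpow_zero]
    calc T (p.1 + p.2) * (f p.1 * g p.2)
      _ = T (p.1 + p.2) * (f p.1 * g p.2) * (‖p.1‖ₑ ^ (α / 2) * ‖p.1‖ₑ ^ (-α / 2)) := by
          rw [h_cancel, mul_one]
      _ = F p * G p := by ring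
  have hF : ∫⁻ p in {p : V × V | ‖p.1‖ ≤ ‖p.2‖}, F p ^ 2 ≤
      (∫⁻ x, T x ^ 2) * weightedL2Sq α f := by
    rw [← lintegral_add_mul_weight_sq hT hf]
    simpa only [F, mul_pow, rpow_div_two_sq] using setLIntegral_le_lintegral _ _
  have hG : ∫⁻ p in {p : V × V | ‖p.1‖ ≤ ‖p.2‖}, G p ^ 2 =
      rieszConst V α * weightedL2Sq (Module.finrank ℝ V - α) g := by
    simpa only [G, mul_pow, rpow_div_two_sq] using setLIntegral_lowHigh_enorm_rpow_neg hg
  calc lowHighForm T f g ^ 2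
    _ ≤ (∫⁻ p in {p : V × V | ‖p.1‖ ≤ ‖p.2‖}, F p ^ 2) *
          ∫⁻ p in {p : V × V | ‖p.1‖ ≤ ‖p.2‖}, G p ^ 2 :=
        h_factor ▸ sq_lintegral_mul_le (by fun_prop) (by fun_prop)
    _ ≤ (∫⁻ x, T x ^ 2) * weightedL2Sq α f *
          (rieszConst V α * weightedL2Sq (Module.finrank ℝ V - α) g) := by
        rw [hG]
        gcongr
    _ = _ := by ring

lemma lintegral_sq_lconvolution_le {f g : V → ℝ≥0∞} (hf : Measurable f) (hg : Measurable g) :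
    ∫⁻ x, (f ⋆ₗ g) x ^ 2 ≤ 2 * (rieszConst V α + rieszConst V (Module.finrank ℝ V - α)) *
      (weightedL2Sq α f * weightedL2Sq (Module.finrank ℝ V - α) g) := by
  refine lintegral_sq_le_of_forall_sq_lintegral_mul_le fun T hT => ?_
  have h_fg := sq_lowHighForm_le (α := α) hT hf hg
  have h_gf := sq_lowHighForm_le (α := Module.finrank ℝ V - α) hT hg hf
  rw [sub_sub_cancel] at h_gf
  calc (∫⁻ x, T x * (f ⋆ₗ g) x) ^ 2
    _ ≤ (lowHighForm T f g + lowHighForm T g f) ^ 2 :=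
        pow_le_pow_left' (lintegral_mul_lconvolution_le hT hf hg) 2
    _ ≤ 2 * (lowHighForm T f g ^ 2 + lowHighForm T g f ^ 2) := add_sq_le_two_mul _ _
    _ ≤ 2 * (rieszConst V α * (∫⁻ x, T x ^ 2) *
            (weightedL2Sq α f * weightedL2Sq (Module.finrank ℝ V - α) g) +
          rieszConst V (Module.finrank ℝ V - α) * (∫⁻ x, T x ^ 2) *
            (weightedL2Sq (Module.finrank ℝ V - α) g * weightedL2Sq α f)) := by
        gcongr
    _ = _ := by ring

end WeightedConvolution

section Plancherel

variable {V F : Type*} [NormedAddCommGroup V] [InnerProductSpace ℝ V] [FiniteDimensional ℝ V]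
  [MeasurableSpace V] [BorelSpace V] [NormedAddCommGroup F]

lemma continuous_fourier_of_integrable [NormedSpace ℂ F] {f : V → F} (hf : Integrable f) :
    Continuous (𝓕 f) :=
  VectorFourier.fourierIntegral_continuous Real.continuous_fourierChar
    (innerSL ℝ).continuous₂ hf

variable [InnerProductSpace ℂ F] [CompleteSpace F] {f : V → F}

open SchwartzMap in
lemma fourier_toLp_ae_eq (hf : Integrable f) (hf₂ : MemLp f 2) :
    ⇑(𝓕 (hf₂.toLp f) : Lp F 2 (volume : Measure V)) =ᵐ[volume] 𝓕 f := by
  refine ae_eq_of_integral_contDiff_smul_eq ((Lp.memLp _).locallyIntegrable one_le_two)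
    (continuous_fourier_of_integrable hf).locallyIntegrable fun g hg hg_supp => ?_
  let φ : 𝓢(V, ℂ) := HasCompactSupport.toSchwartzMap (f := fun x => (g x : ℂ))
    (hg_supp.comp_left Complex.ofReal_zero) (Complex.ofRealCLM.contDiff.comp hg)
  have h_L2 : ∫ x, φ x • (𝓕 (hf₂.toLp f) : Lp F 2 (volume : Measure V)) x =
      ∫ x, 𝓕 φ x • hf₂.toLp f x := by
    have h := congrArg (fun D => D φ) (Lp.fourier_toTemperedDistribution_eq (hf₂.toLp f))
    simpa only [TemperedDistribution.fourier_apply, Lp.toTemperedDistribution_apply] using h.symm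
  have h_L1 : ∫ x, 𝓕 φ x • f x = ∫ x, φ x • 𝓕 f x := by
    simpa using! VectorFourier.integral_fourierIntegral_smul_eq_flip (L := innerₗ V)
      (μ := volume) (ν := volume) Real.continuous_fourierChar continuous_inner φ.integrable hf
  have h_toLp : ∫ x, 𝓕 φ x • hf₂.toLp f x = ∫ x, 𝓕 φ x • f x :=
    integral_congr_ae (hf₂.coeFn_toLp.mono fun x hx => by simp only [hx])
  have hφ (x : V) (y : F) : φ x • y = g x • y := Complex.coe_smul (g x) y
  simpa only [hφ] using h_L2.trans (h_toLp.trans h_L1)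

lemma lintegral_enorm_fourier_sq (hf : Integrable f) (hf₂ : MemLp f 2) :
    ∫⁻ ξ, ‖𝓕 f ξ‖ₑ ^ 2 = ∫⁻ x, ‖f x‖ₑ ^ 2 := by
  rw [lintegral_enorm_sq_eq_eLpNorm_sq, lintegral_enorm_sq_eq_eLpNorm_sq,
    ← eLpNorm_congr_ae (fourier_toLp_ae_eq hf hf₂), ← Lp.enorm_def,
    ← eLpNorm_congr_ae hf₂.coeFn_toLp, ← Lp.enorm_def, ← ofReal_norm, ← ofReal_norm,
    Lp.norm_fourier_eq]

end Plancherel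

section Multiplier

variable {V : Type*} [NormedAddCommGroup V] [InnerProductSpace ℝ V] [FiniteDimensional ℝ V]
  [MeasurableSpace V] [BorelSpace V]

open scoped Convolution in
lemma lintegral_enorm_sq_convolution_le {f g : V → ℂ} {C : ℝ} {M : ℝ≥0∞}
    (hf : Integrable f) (hg : Integrable g) (hgC : ∀ x, ‖g x‖ ≤ C) (hM : ∀ ξ, ‖𝓕 f ξ‖ₑ ≤ M)
    (hM_top : M ≠ ∞) :
    ∫⁻ x, ‖(f ⋆[ContinuousLinearMap.mul ℂ ℂ] g) x‖ₑ ^ 2 ≤ M ^ 2 * ∫⁻ x, ‖g x‖ₑ ^ 2 := by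
  have h_int : Integrable (f ⋆[ContinuousLinearMap.mul ℂ ℂ] g) := hf.integrable_convolution _ hg
  have h_bdd (x : V) : ‖(f ⋆[ContinuousLinearMap.mul ℂ ℂ] g) x‖ ≤ ∫ y, ‖f y‖ * C :=
    norm_integral_le_of_norm_le (hf.norm.mul_const C) <| ae_of_all _ fun y => by
      rw [ContinuousLinearMap.mul_apply', norm_mul]
      gcongr
      exact hgC _
  calc ∫⁻ x, ‖(f ⋆[ContinuousLinearMap.mul ℂ ℂ] g) x‖ₑ ^ 2
    _ = ∫⁻ ξ, ‖𝓕 f ξ * 𝓕 g ξ‖ₑ ^ 2 := by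
        rw [← lintegral_enorm_fourier_sq h_int (memLp_two_of_integrable_of_bounded h_int h_bdd)]
        simp only [Real.fourier_mul_convolution_eq hf hg]
    _ ≤ ∫⁻ ξ, M ^ 2 * ‖𝓕 g ξ‖ₑ ^ 2 := by
        gcongr with ξ
        rw [enorm_mul, mul_pow]
        gcongr
        exact hM ξ
    _ = M ^ 2 * ∫⁻ x, ‖g x‖ₑ ^ 2 := by
        rw [lintegral_const_mul' _ _ (by finiteness),
          lintegral_enorm_fourier_sq hg (memLp_two_of_integrable_of_bounded hg hgC)]

end Multiplier

section RieszWeight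

variable {V : Type*} [NormedAddCommGroup V] {s : ℝ}

/-- Multiplication by `|x|^s`, which on the Fourier side is the symbol of `|D|^s`. -/
def rieszWeight (s : ℝ) (φ : V → ℂ) (x : V) : ℂ :=
  ‖x‖ ^ s • φ x

lemma continuous_rieszWeight {φ : V → ℂ} (hs : 0 ≤ s) (hφ : Continuous φ) :
    Continuous (rieszWeight s φ) :=
  (continuous_norm.rpow_const fun _ => Or.inr hs).smul hφ

lemma enorm_rieszWeight (hs : 0 ≤ s) (φ : V → ℂ) (x : V) :
    ‖rieszWeight s φ x‖ₑ = ‖x‖ₑ ^ s * ‖φ x‖ₑ := by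
  rw [rieszWeight, enorm_smul, Real.enorm_rpow_of_nonneg (norm_nonneg x) hs, enorm_norm]

lemma enorm_rieszWeight_sq (hs : 0 ≤ s) (φ : V → ℂ) (x : V) :
    ‖rieszWeight s φ x‖ₑ ^ 2 = ‖x‖ₑ ^ (2 * s) * ‖φ x‖ₑ ^ 2 := by
  rw [enorm_rieszWeight hs, mul_pow, ← ENNReal.rpow_mul_natCast, mul_comm 2 s, Nat.cast_ofNat]

lemma norm_rieszWeight_le (hs : 0 ≤ s) (φ : V → ℂ) (x : V) :
    ‖rieszWeight s φ x‖ ≤ ‖φ x‖ + ‖x‖ ^ ⌈s⌉₊ * ‖φ x‖ := by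
  have h_rpow : ‖x‖ ^ s ≤ 1 + ‖x‖ ^ ⌈s⌉₊ := by
    rcases le_total ‖x‖ 1 with hx | hx
    · have := Real.rpow_le_one (norm_nonneg x) hx hs
      have : 0 ≤ ‖x‖ ^ ⌈s⌉₊ := by positivity
      linarith
    · have := Real.rpow_le_rpow_of_exponent_le hx (Nat.le_ceil s)
      rw [Real.rpow_natCast] at this
      linarith
  rw [rieszWeight, norm_smul, Real.norm_of_nonneg (by positivity), ← one_add_mul]
  gcongr

variable [NormedSpace ℝ V]

open SchwartzMap in
lemma exists_norm_rieszWeight_le (hs : 0 ≤ s) (φ : 𝓢(V, ℂ)) :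
    ∃ C, ∀ x, ‖rieszWeight s φ x‖ ≤ C :=
  ⟨_, fun x => (norm_rieszWeight_le hs φ x).trans
    (add_le_add (φ.norm_le_seminorm ℝ x) (φ.norm_pow_mul_le_seminorm ℝ ⌈s⌉₊ x))⟩

open SchwartzMap in
lemma integrable_rieszWeight [FiniteDimensional ℝ V] [MeasurableSpace V] [BorelSpace V]
    {μ : Measure V} [μ.HasTemperateGrowth] (hs : 0 ≤ s) (φ : 𝓢(V, ℂ)) :
    Integrable (rieszWeight s φ) μ :=
  (φ.integrable.norm.add (φ.integrable_pow_mul μ ⌈s⌉₊)).mono'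
    (continuous_rieszWeight hs φ.continuous).aestronglyMeasurable
    (ae_of_all _ (norm_rieszWeight_le hs φ))

end RieszWeight

lemma abs_norm_rpow_sub_norm_sub_rpow_le {V : Type*} [SeminormedAddCommGroup V] {s : ℝ}
    (hs : 0 ≤ s) (hs₁ : s ≤ 1) (x y : V) : |‖x‖ ^ s - ‖x - y‖ ^ s| ≤ ‖y‖ ^ s := by
  have h_sub {a b c : ℝ} (ha : 0 ≤ a) (hb : 0 ≤ b) (hc : 0 ≤ c) (h : a ≤ b + c) :
      a ^ s ≤ b ^ s + c ^ s :=
    (Real.rpow_le_rpow ha h hs).trans (Real.rpow_add_le_add_rpow hb hc hs hs₁)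
  have h₁ := h_sub (norm_nonneg x) (norm_nonneg (x - y)) (norm_nonneg y)
    (by simpa using norm_add_le (x - y) y)
  have h₂ := h_sub (norm_nonneg (x - y)) (norm_nonneg x) (norm_nonneg y) (norm_sub_le x y)
  rw [abs_le]
  constructor <;> linarith

section ProductLaw

open SchwartzMap ContinuousLinearMap
open scoped Convolution

variable {V : Type*} [NormedAddCommGroup V] [InnerProductSpace ℝ V] [FiniteDimensional ℝ V]
  [MeasurableSpace V] [BorelSpace V] {s : ℝ}

/-- The square `∫ |ξ|^{2s} |𝓕f(ξ)|² dξ` of the homogeneous Sobolev norm, with values in `[0, ∞]`. -/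
def sobolevSq (s : ℝ) (f : V → ℂ) : ℝ≥0∞ :=
  weightedL2Sq (2 * s) fun ξ => ‖𝓕 f ξ‖ₑ

lemma sobolevSq_eq_lintegral_enorm_rieszWeight_sq (hs : 0 ≤ s) (f : V → ℂ) :
    sobolevSq s f = ∫⁻ ξ, ‖rieszWeight s (𝓕 f) ξ‖ₑ ^ 2 := by
  simp only [enorm_rieszWeight_sq hs, sobolevSq, weightedL2Sq]

lemma fourier_fourier_apply (φ : 𝓢(V, ℂ)) (x : V) : 𝓕 (𝓕 φ) x = φ (-x) := by
  conv_rhs => rw [← (FourierTransform.fourierInv_fourier_eq φ : 𝓕⁻ (𝓕 φ) = φ)]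
  rw [fourierInv_coe, Real.fourierInv_eq_fourier_neg, neg_neg]
  rfl

lemma fourier_mul_eq_convolution (u v : 𝓢(V, ℂ)) (ξ : V) :
    𝓕 (fun x => u x * v x) ξ = (𝓕 ⇑v ⋆[mul ℂ ℂ] 𝓕 ⇑u) ξ := by
  rw [← fourier_coe v, ← fourier_coe u, ← SchwartzMap.convolution_apply]
  change _ = 𝓕⁻ (pairing (mul ℂ ℂ) (𝓕 (𝓕 v)) (𝓕 (𝓕 u))) ξ
  rw [fourierInv_coe, Real.fourierInv_eq_fourier_comp_neg]
  refine congrArg (fun h : V → ℂ => 𝓕 h ξ) (funext fun x => ?_)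
  simp [pairing_apply_apply, fourier_fourier_apply, mul_comm]

lemma convolutionExistsAt_mul_of_bounded {φ ψ : V → ℂ} {C : ℝ} (hφ : Integrable φ)
    (hψ : Continuous ψ) (hC : ∀ x, ‖ψ x‖ ≤ C) (ξ : V) : ConvolutionExistsAt φ ψ ξ (mul ℂ ℂ) :=
  hφ.mul_bdd (c := C) (hψ.comp (continuous_sub_left ξ)).aestronglyMeasurable
    (ae_of_all _ fun _ => hC _)

lemma enorm_rieszWeight_convolution_le {φ ψ : V → ℂ} (hs : 0 ≤ s) (hs₁ : s ≤ 1) {ξ : V}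
    (h : ConvolutionExistsAt φ ψ ξ (mul ℂ ℂ))
    (hw : ConvolutionExistsAt φ (rieszWeight s ψ) ξ (mul ℂ ℂ)) :
    ‖rieszWeight s (φ ⋆[mul ℂ ℂ] ψ) ξ‖ₑ ≤ ‖(φ ⋆[mul ℂ ℂ] rieszWeight s ψ) ξ‖ₑ +
      ((fun η => ‖rieszWeight s φ η‖ₑ) ⋆ₗ fun η => ‖ψ η‖ₑ) ξ := by
  have h_commutator : rieszWeight s (φ ⋆[mul ℂ ℂ] ψ) ξ = (φ ⋆[mul ℂ ℂ] rieszWeight s ψ) ξ +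
      ∫ η, (‖ξ‖ ^ s - ‖ξ - η‖ ^ s) • (φ η * ψ (ξ - η)) := by
    have h_smul : Integrable fun η => ‖ξ‖ ^ s • mul ℂ ℂ (φ η) (ψ (ξ - η)) :=
      h.integrable.smul (‖ξ‖ ^ s)
    rw [← sub_eq_iff_eq_add', rieszWeight, convolution_def, convolution_def, ← integral_smul,
      ← integral_sub h_smul hw.integrable]
    congr with η
    simp only [rieszWeight, mul_apply', mul_smul_comm, sub_smul]
  rw [h_commutator]
  refine (enorm_add_le _ _).trans ?_
  gcongr
  refine (enorm_integral_le_lintegral_enorm _).trans (lintegral_mono fun η => ?_)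
  calc ‖(‖ξ‖ ^ s - ‖ξ - η‖ ^ s) • (φ η * ψ (ξ - η))‖ₑ
    _ ≤ ‖‖η‖ ^ s‖ₑ * (‖φ η‖ₑ * ‖ψ (ξ - η)‖ₑ) := by
        rw [enorm_smul, enorm_mul]
        gcongr
        rw [enorm_le_iff_norm_le, Real.norm_eq_abs, Real.norm_of_nonneg (by positivity)]
        exact abs_norm_rpow_sub_norm_sub_rpow_le hs hs₁ ξ η
    _ = ‖rieszWeight s φ η‖ₑ * ‖ψ (-η + ξ)‖ₑ := by
        rw [rieszWeight, enorm_smul, mul_assoc, sub_eq_neg_add]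

lemma lintegral_enorm_sq_convolution_rieszWeight_le (hs : 0 ≤ s) (u v : 𝓢(V, ℂ)) {M : ℝ≥0∞}
    (hM : ∀ x, ‖v x‖ₑ ≤ M) (hM_top : M ≠ ∞) :
    ∫⁻ ξ, ‖(𝓕 ⇑v ⋆[mul ℂ ℂ] rieszWeight s (𝓕 ⇑u)) ξ‖ₑ ^ 2 ≤ M ^ 2 * sobolevSq s u := by
  obtain ⟨C, hC⟩ := exists_norm_rieszWeight_le hs (𝓕 u)
  refine (lintegral_enorm_sq_convolution_le (𝓕 v).integrable (integrable_rieszWeight hs (𝓕 u)) hC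
    (fun ξ => ?_) hM_top).trans_eq ?_
  · exact (congrArg enorm (fourier_fourier_apply v ξ)).trans_le (hM (-ξ))
  · rw [sobolevSq_eq_lintegral_enorm_rieszWeight_sq hs, fourier_coe]

lemma weightedL2Sq_enorm_rieszWeight {α : ℝ} (hs : 0 ≤ s) (hα : 0 ≤ α) (φ : V → ℂ) :
    weightedL2Sq α (fun ξ => ‖rieszWeight s φ ξ‖ₑ) =
      weightedL2Sq (α + 2 * s) fun ξ => ‖φ ξ‖ₑ := by
  refine lintegral_congr fun ξ => ?_
  rw [enorm_rieszWeight_sq hs, ENNReal.rpow_add_of_nonneg _ _ hα (by positivity), mul_assoc]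

variable [Nontrivial V]

lemma lintegral_sq_lconvolution_rieszWeight_le (hs : 0 ≤ s)
    (hsd : 2 * s ≤ Module.finrank ℝ V) (u v : 𝓢(V, ℂ)) :
    ∫⁻ ξ, ((fun η => ‖rieszWeight s (𝓕 ⇑v) η‖ₑ) ⋆ₗ fun η => ‖𝓕 ⇑u η‖ₑ) ξ ^ 2 ≤
      2 * (rieszConst V (2 * s) + rieszConst V (Module.finrank ℝ V - 2 * s)) *
        (sobolevSq (Module.finrank ℝ V / 2) v * sobolevSq s u) := by
  have h_v : weightedL2Sq (Module.finrank ℝ V - 2 * s) (fun ξ => ‖rieszWeight s (𝓕 ⇑v) ξ‖ₑ) =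
      sobolevSq (Module.finrank ℝ V / 2) v := by
    rw [weightedL2Sq_enorm_rieszWeight hs (sub_nonneg.2 hsd), sub_add_cancel, sobolevSq,
      mul_div_cancel₀ _ two_ne_zero]
  have h := lintegral_sq_lconvolution_le (α := Module.finrank ℝ V - 2 * s)
    (continuous_rieszWeight hs (𝓕 v).continuous).enorm.measurable
    (𝓕 u).continuous.enorm.measurable
  simp only [fourier_coe] at h
  rwa [sub_sub_cancel, h_v, add_comm (rieszConst V _)] at h

lemma sobolevSq_mul_le (hs : 0 ≤ s) (hs₁ : s ≤ 1) (hsd : 2 * s ≤ Module.finrank ℝ V)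
    (u v : 𝓢(V, ℂ)) {M : ℝ≥0∞} (hM : ∀ x, ‖v x‖ₑ ≤ M) (hM_top : M ≠ ∞) :
    sobolevSq s (fun x => u x * v x) ≤ 2 * (M ^ 2 +
      2 * (rieszConst V (2 * s) + rieszConst V (Module.finrank ℝ V - 2 * s)) *
        sobolevSq (Module.finrank ℝ V / 2) v) * sobolevSq s u := by
  obtain ⟨C, hC⟩ := exists_norm_rieszWeight_le hs (𝓕 u)
  have hw : Continuous (rieszWeight s (𝓕 ⇑u)) := continuous_rieszWeight hs (𝓕 u).continuous
  let A := 𝓕 ⇑v ⋆[mul ℂ ℂ] rieszWeight s (𝓕 ⇑u)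
  let T := (fun η => ‖rieszWeight s (𝓕 ⇑v) η‖ₑ) ⋆ₗ fun η => ‖𝓕 ⇑u η‖ₑ
  have hA : Continuous A :=
    BddAbove.continuous_convolution_right_of_integrable _ ⟨C, Set.forall_mem_range.2 hC⟩
      (𝓕 v).integrable hw
  have h_pointwise (ξ : V) : ‖rieszWeight s (𝓕 fun x => u x * v x) ξ‖ₑ ≤ ‖A ξ‖ₑ + T ξ := by
    rw [funext (fourier_mul_eq_convolution u v)]
    refine enorm_rieszWeight_convolution_le hs hs₁ ?_ ?_
    · exact convolutionExistsAt_mul_of_bounded (𝓕 v).integrable (𝓕 u).continuous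
        ((𝓕 u).norm_le_seminorm ℝ) ξ
    · exact convolutionExistsAt_mul_of_bounded (𝓕 v).integrable hw hC ξ
  calc sobolevSq s (fun x => u x * v x)
    _ = ∫⁻ ξ, ‖rieszWeight s (𝓕 fun x => u x * v x) ξ‖ₑ ^ 2 :=
        sobolevSq_eq_lintegral_enorm_rieszWeight_sq hs _
    _ ≤ ∫⁻ ξ, 2 * (‖A ξ‖ₑ ^ 2 + T ξ ^ 2) := lintegral_mono fun ξ =>
        (pow_le_pow_left' (h_pointwise ξ) 2).trans (add_sq_le_two_mul _ _)
    _ = 2 * ((∫⁻ ξ, ‖A ξ‖ₑ ^ 2) + ∫⁻ ξ, T ξ ^ 2) := by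
        rw [lintegral_const_mul' _ _ (by finiteness), lintegral_add_left (by fun_prop)]
    _ ≤ 2 * (M ^ 2 * sobolevSq s u +
          2 * (rieszConst V (2 * s) + rieszConst V (Module.finrank ℝ V - 2 * s)) *
            (sobolevSq (Module.finrank ℝ V / 2) v * sobolevSq s u)) := by
        gcongr
        · exact lintegral_enorm_sq_convolution_rieszWeight_le hs u v hM hM_top
        · exact lintegral_sq_lconvolution_rieszWeight_le hs hsd u v
    _ = _ := by ring

end ProductLaw

section Gradient

open SchwartzMap
open scoped LineDeriv

variable {V : Type*} [NormedAddCommGroup V] [InnerProductSpace ℝ V] [FiniteDimensional ℝ V]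
  [MeasurableSpace V] [BorelSpace V]

lemma lintegral_enorm_fderiv_sq (v : 𝓢(V, ℂ)) (m : V) :
    ∫⁻ x, ‖fderiv ℝ v x m‖ₑ ^ 2 =
      ENNReal.ofReal (2 * π) ^ 2 * ∫⁻ ξ, ‖inner ℝ ξ m‖ₑ ^ 2 * ‖𝓕 v ξ‖ₑ ^ 2 := by
  have h_growth : (inner ℝ · m : V → ℝ).HasTemperateGrowth :=
    ((innerSL ℝ).flip m).hasTemperateGrowth
  have h_symbol (ξ : V) :
      ‖𝓕 (∂_{m} v) ξ‖ₑ = ENNReal.ofReal (2 * π) * (‖inner ℝ ξ m‖ₑ * ‖𝓕 v ξ‖ₑ) := by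
    rw [fourier_lineDerivOp_eq, smul_apply, smulLeftCLM_apply_apply h_growth, enorm_smul,
      enorm_smul, ← ofReal_norm (2 * π * Complex.I)]
    simp [abs_of_pos Real.pi_pos]
  calc ∫⁻ x, ‖fderiv ℝ v x m‖ₑ ^ 2
    _ = ∫⁻ ξ, ‖𝓕 (∂_{m} v) ξ‖ₑ ^ 2 :=
        (lintegral_enorm_fourier_sq (∂_{m} v).integrable ((∂_{m} v).memLp 2 volume)).symm
    _ = _ := by
        simp only [h_symbol, mul_pow]
        rw [lintegral_const_mul' _ _ (by finiteness)]

lemma sum_lintegral_enorm_fderiv_sq {ι : Type*} [Fintype ι] (e : OrthonormalBasis ι ℝ V)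
    (v : 𝓢(V, ℂ)) :
    ∑ i, ∫⁻ x, ‖fderiv ℝ v x (e i)‖ₑ ^ 2 = ENNReal.ofReal (2 * π) ^ 2 * sobolevSq 1 v := by
  have h_norm (ξ : V) : ∑ i, ‖inner ℝ ξ (e i)‖ₑ ^ 2 = ‖ξ‖ₑ ^ (2 * 1 : ℝ) := by
    simp only [← ofReal_norm, ← ENNReal.ofReal_pow (norm_nonneg _)]
    rw [← ENNReal.ofReal_sum_of_nonneg (fun i _ => by positivity), e.sum_sq_norm_inner_left,
      mul_one, ENNReal.rpow_two, ENNReal.ofReal_pow (norm_nonneg _)]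
  have hv := (𝓕 v).continuous
  simp only [lintegral_enorm_fderiv_sq, ← Finset.mul_sum, sobolevSq, weightedL2Sq, ← h_norm,
    Finset.sum_mul]
  rw [lintegral_finsetSum _ fun i _ => by fun_prop]
  rfl

lemma sobolevSq_one_le {ι : Type*} [Fintype ι] (e : OrthonormalBasis ι ℝ V) (v : 𝓢(V, ℂ)) :
    sobolevSq 1 v ≤ ∑ i, ∫⁻ x, ‖fderiv ℝ v x (e i)‖ₑ ^ 2 := by
  rw [sum_lintegral_enorm_fderiv_sq]
  refine le_mul_of_one_le_left' (one_le_pow₀ (ENNReal.one_le_ofReal.2 ?_))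
  linarith [Real.two_le_pi]

end Gradient

section Slicing

open SchwartzMap

lemma norm_emb_sq (x : E 2) (t : ℝ) : ‖emb x t‖ ^ 2 = ‖x‖ ^ 2 + t ^ 2 := by
  simp [EuclideanSpace.norm_sq_eq, Fin.sum_univ_three, emb]

lemma inner_emb (x y : E 2) (t τ : ℝ) : inner ℝ (emb x t) (emb y τ) = inner ℝ x y + t * τ := by
  simp [PiLp.inner_apply, Fin.sum_univ_three, emb, mul_comm]

lemma norm_le_norm_emb (x : E 2) (t : ℝ) : ‖x‖ ≤ ‖emb x t‖ :=
  le_of_sq_le_sq (by linarith [norm_emb_sq x t, sq_nonneg t]) (norm_nonneg _)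

lemma continuous_emb : Continuous fun p : E 2 × ℝ => emb p.1 p.2 := by
  refine (EuclideanSpace.equiv (Fin 3) ℝ).symm.continuous.comp (continuous_pi fun i => ?_)
  suffices h : Continuous fun p : E 2 × ℝ => (![p.1 0, p.1 1, p.2] : Fin 3 → ℝ) i from h
  fin_cases i
  exacts [by fun_prop, by fun_prop, continuous_snd]

lemma measurePreserving_emb : MeasurePreserving fun p : E 2 × ℝ => emb p.1 p.2 := by
  have h_swap : MeasurePreserving fun p : E 2 × ℝ =>
      (p.2, (MeasurableEquiv.toLp 2 (Fin 2 → ℝ)).symm p.1) :=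
    ((MeasurePreserving.id volume).prod
      (EuclideanSpace.volume_preserving_symm_measurableEquiv_toLp (Fin 2))).comp
        Measure.measurePreserving_swap
  have h_cons := (volume_preserving_piFinSuccAbove (fun _ : Fin 3 => ℝ) 2).symm
  have h_toLp := (EuclideanSpace.volume_preserving_symm_measurableEquiv_toLp (Fin 3)).symm
  convert h_toLp.comp (h_cons.comp h_swap) using 1
  ext p i
  fin_cases i <;> simp [emb, MeasurableEquiv.piFinSuccAbove, Fin.insertNthEquiv] <;> rfl

/-- The inclusion `x_h ↦ (x_h, 0)`, the linear part of the affine isometry `emb · t`. -/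
def embHoriz : E 2 →ₗᵢ[ℝ] E 3 where
  toFun x := emb x 0
  map_add' x y := by ext i; fin_cases i <;> simp [emb]
  map_smul' c x := by ext i; fin_cases i <;> simp [emb]
  norm_map' x := by
    change ‖emb x 0‖ = ‖x‖
    rw [← sq_eq_sq₀ (norm_nonneg _) (norm_nonneg _), norm_emb_sq]
    simp

lemma emb_eq_embHoriz_add (x : E 2) (t : ℝ) : emb x t = embHoriz x + emb 0 t := by
  change emb x t = emb x 0 + emb 0 t
  ext i
  fin_cases i <;> simp [emb]

lemma embHoriz_single (i : Fin 2) :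
    embHoriz (EuclideanSpace.single i 1) = EuclideanSpace.single i.castSucc 1 := by
  change emb (EuclideanSpace.single i 1) 0 = _
  ext j
  fin_cases i <;> fin_cases j <;> simp [emb]

lemma isometry_emb (t : ℝ) : Isometry (emb · t) := by
  rw [funext (emb_eq_embHoriz_add · t)]
  exact (isometry_add_right (emb 0 t)).comp embHoriz.isometry

lemma hasTemperateGrowth_emb (t : ℝ) : (emb · t).HasTemperateGrowth := by
  rw [funext (emb_eq_embHoriz_add · t)]
  exact embHoriz.toContinuousLinearMap.hasTemperateGrowth.add (.const (emb 0 t))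

lemma hasFDerivAt_emb (x : E 2) (t : ℝ) :
    HasFDerivAt (emb · t) embHoriz.toContinuousLinearMap x := by
  rw [funext (emb_eq_embHoriz_add · t)]
  exact embHoriz.toContinuousLinearMap.hasFDerivAt.add_const (emb 0 t)

/-- The restriction `φ(·, t)` of a Schwartz function to a horizontal plane. -/
def slice (φ : 𝓢(E 3, ℂ)) (t : ℝ) : 𝓢(E 2, ℂ) :=
  compCLMOfAntilipschitz ℂ (hasTemperateGrowth_emb t) (isometry_emb t).antilipschitz φ

lemma slice_apply (φ : 𝓢(E 3, ℂ)) (t : ℝ) (x : E 2) : slice φ t x = φ (emb x t) :=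
  rfl

lemma fderiv_slice_single (φ : 𝓢(E 3, ℂ)) (t : ℝ) (x : E 2) (i : Fin 2) :
    fderiv ℝ (slice φ t) x (EuclideanSpace.single i 1) =
      fderiv ℝ φ (emb x t) (EuclideanSpace.single i.castSucc 1) := by
  have h : HasFDerivAt (slice φ t)
      ((fderiv ℝ φ (emb x t)).comp embHoriz.toContinuousLinearMap) x :=
    φ.differentiableAt.hasFDerivAt.comp x (hasFDerivAt_emb x t)
  rw [h.fderiv, ← embHoriz_single]
  rfl

lemma exists_integral_norm_slice_le (φ : 𝓢(E 3, ℂ)) : ∃ C, ∀ t, ∫ x, ‖slice φ t x‖ ≤ C := by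
  obtain ⟨C, hC⟩ : ∃ C, ∀ y, (1 + ‖y‖) ^ 3 * ‖φ y‖ ≤ C :=
    ⟨_, fun y => by
      simpa using φ.one_add_le_sup_seminorm_apply (𝕜 := ℝ) (m := (3, 0)) le_rfl le_rfl y⟩
  have h_int : Integrable fun x : E 2 => (1 + ‖x‖) ^ (-3 : ℝ) :=
    integrable_one_add_norm (by simp; norm_num)
  have : 0 ≤ C := le_trans (by positivity) (hC 0)
  refine ⟨∫ x : E 2, C * (1 + ‖x‖) ^ (-3 : ℝ), fun t =>
    integral_mono (slice φ t).integrable.norm (h_int.const_mul C) fun x => ?_⟩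
  have h_pos : 0 < 1 + ‖x‖ := by positivity
  have h_le := norm_le_norm_emb x t
  simp only [slice_apply]
  rw [Real.rpow_neg h_pos.le, ← div_eq_mul_inv, le_div_iff₀ (by positivity), mul_comm]
  refine le_trans ?_ (hC (emb x t))
  norm_cast
  gcongr

lemma exists_norm_fourier_slice_le (φ : 𝓢(E 3, ℂ)) :
    ∃ C, ∀ t ξ, ‖𝓕 (slice φ t) ξ‖ ≤ C := by
  obtain ⟨C, hC⟩ := exists_integral_norm_slice_le φ
  exact ⟨C, fun t ξ => (VectorFourier.norm_fourierIntegral_le_integral_norm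
    𝐞 volume (innerₗ (E 2)) (slice φ t) ξ).trans (hC t)⟩

lemma fourier_slice_apply (φ : 𝓢(E 3, ℂ)) (t : ℝ) (ξ : E 2) :
    𝓕 (slice φ t) ξ = ∫ x, 𝐞 (-inner ℝ x ξ) • φ (emb x t) :=
  Real.fourier_eq (slice φ t) ξ

lemma integrable_fourierChar_smul_emb (φ : 𝓢(E 3, ℂ)) (ζ : E 3) :
    Integrable fun p : E 2 × ℝ => 𝐞 (-inner ℝ (emb p.1 p.2) ζ) • φ (emb p.1 p.2) := by
  have h : Integrable fun y : E 3 => 𝐞 (-inner ℝ y ζ) • φ y := by simpa using φ.integrable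
  exact measurePreserving_emb.integrable_comp_of_integrable h

lemma integrable_fourier_slice (φ : 𝓢(E 3, ℂ)) (ξ : E 2) :
    Integrable fun t => 𝓕 (slice φ t) ξ := by
  have h := (integrable_fourierChar_smul_emb φ (emb ξ 0)).integral_prod_right
  simpa only [fourier_slice_apply, inner_emb, mul_zero, add_zero] using h

lemma measurable_fourier_slice (φ : 𝓢(E 3, ℂ)) :
    Measurable fun p : ℝ × E 2 => 𝓕 (slice φ p.1) p.2 := by
  have hφ := φ.continuous
  have h_emb : Continuous fun q : (ℝ × E 2) × E 2 => emb q.2 q.1.1 :=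
    continuous_emb.comp (by fun_prop : Continuous fun q : (ℝ × E 2) × E 2 => (q.2, q.1.1))
  have h_cont : Continuous fun q : (ℝ × E 2) × E 2 =>
      𝐞 (-inner ℝ q.2 q.1.2) • φ (emb q.2 q.1.1) :=
    (Real.continuous_fourierChar.comp (by fun_prop)).smul (by fun_prop)
  simp only [fourier_slice_apply]
  exact h_cont.stronglyMeasurable.integral_prod_right.measurable

lemma fourier_fourier_slice (φ : 𝓢(E 3, ℂ)) (ξ : E 2) (τ : ℝ) :
    𝓕 (fun t => 𝓕 (slice φ t) ξ) τ = 𝓕 φ (emb ξ τ) := by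
  let F (y : E 3) : ℂ := 𝐞 (-inner ℝ y (emb ξ τ)) • φ y
  have hF : Integrable F := by simpa [F] using φ.integrable
  have h_char (x : E 2) (t : ℝ) :
      𝐞 (-inner ℝ t τ) • 𝐞 (-inner ℝ x ξ) • φ (emb x t) = F (emb x t) := by
    rw [smul_smul, ← AddChar.map_add_eq_mul, ← neg_add_rev]
    simp only [F, inner_emb, inner_apply, mul_comm t]
  calc 𝓕 (fun t => 𝓕 (slice φ t) ξ) τ
    _ = ∫ t, ∫ x, F (emb x t) := by
        rw [Real.fourier_eq]
        simp only [fourier_slice_apply, ← h_char, Circle.smul_def, integral_smul]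
    _ = ∫ p : E 2 × ℝ, F (emb p.1 p.2) :=
        (integral_prod_symm _ (integrable_fourierChar_smul_emb φ (emb ξ τ))).symm
    _ = ∫ y, F y := by
        rw [← measurePreserving_emb.map_eq, integral_map measurePreserving_emb.aemeasurable]
        exact measurePreserving_emb.map_eq ▸ hF.aestronglyMeasurable
    _ = 𝓕 φ (emb ξ τ) := (Real.fourier_eq φ _).symm

lemma lintegral_enorm_fourier_slice_sq (φ : 𝓢(E 3, ℂ)) (ξ : E 2) :
    ∫⁻ t, ‖𝓕 (slice φ t) ξ‖ₑ ^ 2 = ∫⁻ τ, ‖𝓕 φ (emb ξ τ)‖ₑ ^ 2 := by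
  obtain ⟨C, hC⟩ := exists_norm_fourier_slice_le φ
  have h_int := integrable_fourier_slice φ ξ
  rw [← lintegral_enorm_fourier_sq h_int
    (memLp_two_of_integrable_of_bounded h_int fun t => hC t ξ)]
  simp only [fourier_fourier_slice]

lemma lintegral_sobolevSq_slice_le {s : ℝ} (hs : 0 ≤ s) (φ : 𝓢(E 3, ℂ)) :
    ∫⁻ t, sobolevSq s (slice φ t) ≤ sobolevSq s φ := by
  have h_meas := measurable_fourier_slice φ
  have hφ : Measurable (𝓕 ⇑φ) := (𝓕 φ).continuous.measurable
  have hF : Measurable fun ζ : E 3 => ‖ζ‖ₑ ^ (2 * s) * ‖𝓕 φ ζ‖ₑ ^ 2 := by fun_prop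
  calc ∫⁻ t, sobolevSq s (slice φ t)
    _ = ∫⁻ ξ : E 2, ∫⁻ t, ‖ξ‖ₑ ^ (2 * s) * ‖𝓕 (slice φ t) ξ‖ₑ ^ 2 :=
        lintegral_lintegral_swap (by fun_prop)
    _ = ∫⁻ ξ : E 2, ∫⁻ τ, ‖ξ‖ₑ ^ (2 * s) * ‖𝓕 φ (emb ξ τ)‖ₑ ^ 2 := by
        refine lintegral_congr fun ξ => ?_
        rw [lintegral_const_mul' _ _ (by finiteness), lintegral_const_mul' _ _ (by finiteness),
          lintegral_enorm_fourier_slice_sq]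
    _ ≤ ∫⁻ ξ : E 2, ∫⁻ τ, ‖emb ξ τ‖ₑ ^ (2 * s) * ‖𝓕 φ (emb ξ τ)‖ₑ ^ 2 := by
        gcongr with ξ τ
        exact enorm_le_iff_norm_le.2 (norm_le_norm_emb ξ τ)
    _ = sobolevSq s φ := by
        simp only [sobolevSq, weightedL2Sq, ← fourier_coe]
        rw [← measurePreserving_emb.lintegral_comp hF]
        exact (lintegral_prod _ (hF.comp continuous_emb.measurable).aemeasurable).symm

end Slicing

section SobolevNorm

open SchwartzMap

variable {d : ℕ} {s : ℝ}

lemma hNorm_nonneg (f : E d → ℂ) : 0 ≤ hNorm d s f :=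
  Real.rpow_nonneg (integral_nonneg fun ξ => by positivity) _

lemma hNorm_sq (f : E d → ℂ) : hNorm d s f ^ 2 = ∫ ξ, ‖rieszWeight s (𝓕 f) ξ‖ ^ 2 := by
  rw [hNorm, ← Real.sqrt_eq_rpow, Real.sq_sqrt (integral_nonneg fun ξ => by positivity)]
  refine integral_congr_ae (ae_of_all _ fun ξ => ?_)
  simp only [rieszWeight, norm_smul, mul_pow,
    Real.norm_of_nonneg (Real.rpow_nonneg (norm_nonneg ξ) s)]
  rw [← Real.rpow_mul_natCast (norm_nonneg ξ), mul_comm 2 s, Nat.cast_ofNat]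

lemma ofReal_hNorm_sq_le (hs : 0 ≤ s) (f : E d → ℂ) :
    ENNReal.ofReal (hNorm d s f ^ 2) ≤ sobolevSq s f := by
  rw [hNorm_sq, sobolevSq_eq_lintegral_enorm_rieszWeight_sq hs]
  refine (ofReal_integral_le_lintegral_ofReal fun ξ => by positivity).trans_eq ?_
  simp only [ENNReal.ofReal_pow (norm_nonneg _), ofReal_norm]

lemma ofReal_hNorm_sq (hs : 0 ≤ s) (φ : 𝓢(E d, ℂ)) :
    ENNReal.ofReal (hNorm d s φ ^ 2) = sobolevSq s φ := by
  obtain ⟨C, hC⟩ := exists_norm_rieszWeight_le hs (𝓕 φ)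
  rw [hNorm_sq, sobolevSq_eq_lintegral_enorm_rieszWeight_sq hs]
  exact ofReal_integral_norm_sq
    (memLp_two_of_integrable_of_bounded (integrable_rieszWeight hs (𝓕 φ)) hC)

end SobolevNorm

section HorizontalGradient

open SchwartzMap
open scoped LineDeriv

/-- The integral `‖∇_h b(·, t)‖²_{L²_h}`. -/
def horizGradSq (b : E 3 → ℂ) (t : ℝ) : ℝ :=
  ∫ xh : E 2, (‖fderiv ℝ b (emb xh t) (EuclideanSpace.single 0 1)‖ ^ 2
    + ‖fderiv ℝ b (emb xh t) (EuclideanSpace.single 1 1)‖ ^ 2)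

/-- The norm `‖∇_h b‖_{L^∞_v L²_h}`. As a real supremum it is meaningful only when the slice norms
are bounded, which is the case for Schwartz functions. -/
def horizGradNorm (b : E 3 → ℂ) : ℝ :=
  ⨆ t : ℝ, horizGradSq b t ^ (1/2 : ℝ)

lemma horizGradSq_nonneg (b : E 3 → ℂ) (t : ℝ) : 0 ≤ horizGradSq b t :=
  integral_nonneg fun _ => by positivity

lemma horizGradNorm_nonneg (b : E 3 → ℂ) : 0 ≤ horizGradNorm b :=
  Real.iSup_nonneg fun t => Real.rpow_nonneg (horizGradSq_nonneg b t) _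

lemma integrable_norm_slice_sq (φ : 𝓢(E 3, ℂ)) (t : ℝ) :
    Integrable fun x => ‖slice φ t x‖ ^ 2 :=
  ((slice φ t).memLp 2 volume).integrable_norm_pow two_ne_zero

lemma exists_integral_norm_slice_sq_le (φ : 𝓢(E 3, ℂ)) :
    ∃ C, ∀ t, ∫ x, ‖slice φ t x‖ ^ 2 ≤ C := by
  obtain ⟨C, hC⟩ := exists_integral_norm_slice_le φ
  let B := SchwartzMap.seminorm ℝ 0 0 φ
  have : 0 ≤ B := apply_nonneg _ _
  refine ⟨B * C, fun t => ?_⟩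
  calc ∫ x, ‖slice φ t x‖ ^ 2
    _ ≤ ∫ x, B * ‖slice φ t x‖ := by
        refine integral_mono (integrable_norm_slice_sq φ t)
          ((slice φ t).integrable.norm.const_mul B) fun x => ?_
        simp only [sq]
        gcongr
        exact φ.norm_le_seminorm ℝ _
    _ ≤ B * C := by
        rw [integral_const_mul]
        gcongr
        exact hC t

/-- The horizontal partial derivative `∂_i b` as a Schwartz function. -/
def horizDeriv (i : Fin 2) (b : 𝓢(E 3, ℂ)) : 𝓢(E 3, ℂ) :=
  ∂_{(EuclideanSpace.single i.castSucc 1 : E 3)} b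

lemma horizGradSq_eq (b : 𝓢(E 3, ℂ)) (t : ℝ) :
    horizGradSq b t = (∫ x, ‖slice (horizDeriv 0 b) t x‖ ^ 2) +
      ∫ x, ‖slice (horizDeriv 1 b) t x‖ ^ 2 :=
  integral_add (integrable_norm_slice_sq (horizDeriv 0 b) t)
    (integrable_norm_slice_sq (horizDeriv 1 b) t)

lemma horizGradSq_le (b : 𝓢(E 3, ℂ)) (t : ℝ) : horizGradSq b t ≤ horizGradNorm b ^ 2 := by
  obtain ⟨C₀, hC₀⟩ := exists_integral_norm_slice_sq_le (horizDeriv 0 b)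
  obtain ⟨C₁, hC₁⟩ := exists_integral_norm_slice_sq_le (horizDeriv 1 b)
  have h_bdd : BddAbove (Set.range fun t => horizGradSq b t ^ (1/2 : ℝ)) := by
    refine ⟨(C₀ + C₁) ^ (1/2 : ℝ), Set.forall_mem_range.2 fun t => ?_⟩
    refine Real.rpow_le_rpow (horizGradSq_nonneg b t) ?_ (by norm_num)
    exact (horizGradSq_eq b t).trans_le (add_le_add (hC₀ t) (hC₁ t))
  rw [← Real.sqrt_le_left (horizGradNorm_nonneg b), Real.sqrt_eq_rpow]
  exact le_ciSup h_bdd t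

lemma sobolevSq_one_slice_le (b : 𝓢(E 3, ℂ)) (t : ℝ) :
    sobolevSq 1 (slice b t) ≤ ENNReal.ofReal (horizGradSq b t) := by
  have h := sobolevSq_one_le (EuclideanSpace.basisFun (Fin 2) ℝ) (slice b t)
  simp only [Fin.sum_univ_two, EuclideanSpace.basisFun_apply, fderiv_slice_single] at h
  rw [horizGradSq_eq, ENNReal.ofReal_add (integral_nonneg fun _ => by positivity)
    (integral_nonneg fun _ => by positivity),
    ofReal_integral_norm_sq ((slice _ t).memLp 2 volume),
    ofReal_integral_norm_sq ((slice _ t).memLp 2 volume)]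
  exact h

end HorizontalGradient

section SlicewiseProduct

open SchwartzMap

variable {s : ℝ}

/-- The constant in the slicewise product estimate at regularity `s`. -/
def slicewiseConst (s : ℝ) : ℝ≥0∞ :=
  2 * (1 + 2 * (rieszConst (E 2) (2 * s) + rieszConst (E 2) (2 - 2 * s)))

lemma slicewiseConst_ne_top (hs : 0 < s) (hs₁ : s < 1) : slicewiseConst s ≠ ∞ := by
  have h₁ : rieszConst (E 2) (2 * s) ≠ ∞ := rieszConst_ne_top (by simp; linarith)
  have h₂ : rieszConst (E 2) (2 - 2 * s) ≠ ∞ := rieszConst_ne_top (by simp; linarith)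
  rw [slicewiseConst]
  finiteness

lemma sobolevSq_slice_mul_le (hs : 0 ≤ s) (hs₁ : s ≤ 1) (a b : 𝓢(E 3, ℂ)) (t : ℝ) :
    sobolevSq s (fun x => slice a t x * slice b t x) ≤
      slicewiseConst s * ENNReal.ofReal ((horizGradNorm b + ⨆ x, ‖b x‖) ^ 2) *
        sobolevSq s (slice a t) := by
  let D := horizGradNorm b
  let M := ⨆ x, ‖b x‖
  let κ := 2 * (rieszConst (E 2) (2 * s) + rieszConst (E 2) (2 - 2 * s))
  have hD : 0 ≤ D := horizGradNorm_nonneg b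
  have hM : 0 ≤ M := Real.iSup_nonneg fun _ => norm_nonneg _
  have h_bdd : BddAbove (Set.range fun x => ‖b x‖) :=
    ⟨_, Set.forall_mem_range.2 (b.norm_le_seminorm ℝ)⟩
  have hbM (x : E 2) : ‖slice b t x‖ₑ ≤ ENNReal.ofReal M := by
    rw [← ofReal_norm]
    exact ENNReal.ofReal_le_ofReal (le_ciSup h_bdd (emb x t))
  have h_grad : sobolevSq 1 (slice b t) ≤ ENNReal.ofReal (D ^ 2) :=
    (sobolevSq_one_slice_le b t).trans (ENNReal.ofReal_le_ofReal (horizGradSq_le b t))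
  have h := sobolevSq_mul_le hs hs₁ (by simpa using hs₁) (slice a t) (slice b t) hbM
    ENNReal.ofReal_ne_top
  simp only [finrank_euclideanSpace, Fintype.card_fin, Nat.cast_ofNat] at h
  rw [div_self two_ne_zero] at h
  refine h.trans (mul_le_mul_left ?_ _)
  rw [slicewiseConst, mul_assoc 2 (1 + _)]
  gcongr 2 * ?_
  calc ENNReal.ofReal M ^ 2 + κ * sobolevSq 1 (slice b t)
    _ ≤ ENNReal.ofReal ((D + M) ^ 2) + κ * ENNReal.ofReal ((D + M) ^ 2) := by
        rw [← ENNReal.ofReal_pow hM]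
        gcongr ENNReal.ofReal (?_ ^ 2) + κ * ?_
        · linarith
        · refine h_grad.trans (ENNReal.ofReal_le_ofReal ?_)
          gcongr
          linarith
    _ = (1 + κ) * ENNReal.ofReal ((D + M) ^ 2) := by ring

lemma integral_hNorm_slice_mul_sq_le (hs : 0 < s) (hs₁ : s < 1) (a b : 𝓢(E 3, ℂ)) :
    ∫ t, hNorm 2 s (fun x => a (emb x t) * b (emb x t)) ^ 2 ≤
      (slicewiseConst s).toReal * (horizGradNorm b + ⨆ x, ‖b x‖) ^ 2 * hNorm 3 s a ^ 2 := by
  let K := horizGradNorm b + ⨆ x, ‖b x‖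
  have hκ := slicewiseConst_ne_top hs hs₁
  refine (ENNReal.ofReal_le_ofReal_iff (by positivity)).1 ?_
  calc ENNReal.ofReal (∫ t, hNorm 2 s (fun x => a (emb x t) * b (emb x t)) ^ 2)
    _ ≤ ∫⁻ t, ENNReal.ofReal (hNorm 2 s (fun x => slice a t x * slice b t x) ^ 2) :=
        ofReal_integral_le_lintegral_ofReal fun t => by positivity
    _ ≤ ∫⁻ t, slicewiseConst s * ENNReal.ofReal (K ^ 2) * sobolevSq s (slice a t) :=
        lintegral_mono fun t =>
          (ofReal_hNorm_sq_le hs.le _).trans (sobolevSq_slice_mul_le hs.le hs₁.le a b t)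
    _ = slicewiseConst s * ENNReal.ofReal (K ^ 2) * ∫⁻ t, sobolevSq s (slice a t) :=
        lintegral_const_mul' _ _ (by finiteness)
    _ ≤ slicewiseConst s * ENNReal.ofReal (K ^ 2) * ENNReal.ofReal (hNorm 3 s a ^ 2) := by
        rw [ofReal_hNorm_sq hs.le]
        gcongr
        exact lintegral_sobolevSq_slice_le hs.le a
    _ = ENNReal.ofReal ((slicewiseConst s).toReal * K ^ 2 * hNorm 3 s a ^ 2) := by
        rw [ENNReal.ofReal_mul (by positivity), ENNReal.ofReal_mul (by positivity),
          ENNReal.ofReal_toReal hκ]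

theorem product_slicewise_half_general (hs : 0 < s) (hs₁ : s < 1) :
    ∃ C > (0 : ℝ), ∀ a b : 𝓢(E 3, ℂ),
      (∫ x₃ : ℝ, hNorm 2 s (fun xh => a (emb xh x₃) * b (emb xh x₃)) ^ 2) ^ (1/2 : ℝ) ≤
        C * hNorm 3 s a * (horizGradNorm b + ⨆ x, ‖b x‖) := by
  refine ⟨√(slicewiseConst s).toReal + 1, by positivity, fun a b => ?_⟩
  have hH : 0 ≤ hNorm 3 s a := hNorm_nonneg a
  have hK : 0 ≤ horizGradNorm b + ⨆ x, ‖b x‖ :=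
    add_nonneg (horizGradNorm_nonneg b) (Real.iSup_nonneg fun _ => norm_nonneg _)
  rw [← Real.sqrt_eq_rpow]
  refine (Real.sqrt_le_sqrt (integral_hNorm_slice_mul_sq_le hs hs₁ a b)).trans ?_
  rw [Real.sqrt_mul (by positivity), Real.sqrt_mul (by positivity), Real.sqrt_sq hK,
    Real.sqrt_sq hH, mul_right_comm]
  gcongr
  exact le_add_of_nonneg_right zero_le_one

end SlicewiseProduct

/-- `‖ab‖_{L²_v Ḣ^{1/2}_h} ≤ C ‖a‖_{Ḣ^{1/2}(ℝ³)}
(‖∇_h b‖_{L^∞_v L²_h} + ‖b‖_{L^∞})`. -/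
theorem product_slicewise_half :
    ∃ C > (0:ℝ), ∀ a b : E 3 → ℂ,
      ContDiff ℝ (⊤ : ℕ∞) a → HasCompactSupport a → ContDiff ℝ (⊤ : ℕ∞) b → HasCompactSupport b →
      (∫ x₃ : ℝ, (hNorm 2 (1/2) (fun xh : E 2 => a (emb xh x₃) * b (emb xh x₃))) ^ 2) ^ (1/2 : ℝ) ≤
        C * hNorm 3 (1/2) a *
          ((⨆ x₃ : ℝ, (∫ xh : E 2,
              (‖fderiv ℝ b (emb xh x₃) (EuclideanSpace.single 0 1)‖ ^ 2
               + ‖fderiv ℝ b (emb xh x₃) (EuclideanSpace.single 1 1)‖ ^ 2)) ^ (1/2 : ℝ))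
            + ⨆ x : E 3, ‖b x‖) := by
  obtain ⟨C, hC, h⟩ := product_slicewise_half_general one_half_pos one_half_lt_one
  exact ⟨C, hC, fun a b ha ha_supp hb hb_supp =>
    h (ha_supp.toSchwartzMap ha) (hb_supp.toSchwartzMap hb)⟩
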